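/- Let R be a regular domain with a generalized regular system of parameters x = x_1,…,x_p, and let I, J ⊆ R be ideals whose integral closures are monomial ideals in x. Then I̅ = J̅ if and only if Γ_x(I) = Γ_x(J). -/

import Mathlib

open Ideal Set Pointwise

noncomputable section

namespace NND

variable {R : Type*} [CommRing R] {p : ℕ}

/-- The monomial `x^a = x 0 ^ a 0 * ⋯` in the elements `x`. -/
def mono (x : Fin p → R) (a : Fin p → ℕ) : R := ∏ i, x i ^ a i

/-- A (commutative) ring is regular local if it is Noetherian local and its maximal ideal
can be generated by `dim R` elements. -/
def IsRegularLocal (A : Type*) [CommRing A] : Prop :=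
  IsNoetherianRing A ∧ ∃ h : IsLocalRing A, ∃ s : Finset A,
    Ideal.span (s : Set A) = @IsLocalRing.maximalIdeal A _ h ∧
    (s.card : WithBot (WithTop ℕ)) = ringKrullDim A

/-- A regular domain: an integral domain whose localization at every prime is regular local. -/
def IsRegularDomain (A : Type*) [CommRing A] : Prop :=
  IsDomain A ∧ ∀ (P : Ideal A) (hP : P.IsPrime), IsRegularLocal (@Localization.AtPrime A _ P hP)

/-- `x` is a regular sequence. -/
def IsRegSeq (x : Fin p → R) : Prop :=
  Ideal.span (Set.range x) ≠ ⊤ ∧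
  ∀ i : Fin p, ∀ r : R, r * x i ∈ Ideal.span (x '' {j | j < i}) →
    r ∈ Ideal.span (x '' {j | j < i})

/-- A generalized regular system of parameters: a permutable regular sequence all of whose
subquotients are regular domains. -/
def IsGRSOP (x : Fin p → R) : Prop :=
  (∀ σ : Equiv.Perm (Fin p), IsRegSeq (x ∘ σ)) ∧
  ∀ S : Set (Fin p), IsRegularDomain (R ⧸ Ideal.span (x '' S))

/-- `A` is the exponent set of a monomial representation of `f`:
`h * f = ∑_{a ∈ A} r a * x^a` with `h` and the `r a` outside `(x_1, …, x_p)`. -/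
def IsMonRep (x : Fin p → R) (f : R) (A : Finset (Fin p → ℕ)) : Prop :=
  ∃ (h : R) (r : (Fin p → ℕ) → R),
    h ∉ Ideal.span (Set.range x) ∧ (∀ a ∈ A, r a ∉ Ideal.span (Set.range x)) ∧
    h * f = ∑ a ∈ A, r a * mono x a

/-- A minimal (irredundant) monomial representation: no monomial divides another. -/
def IsMinMonRep (x : Fin p → R) (f : R) (A : Finset (Fin p → ℕ)) : Prop :=
  IsMonRep x f A ∧ ∀ a ∈ A, ∀ b ∈ A, a ≠ b → ¬ mono x a ∣ mono x b

open Classical in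
/-- The support of `f`: the exponent set of its (unique) minimal monomial representation. -/
def supp (x : Fin p → R) (f : R) : Set (Fin p → ℕ) :=
  if h : ∃ A : Finset (Fin p → ℕ), IsMinMonRep x f A then ↑h.choose else ∅

/-- Embedding of exponent vectors into `ℝ^p`. -/
def toR (a : Fin p → ℕ) : Fin p → ℝ := fun i => (a i : ℝ)

/-- The Newton polyhedron of a set of ring elements. -/
def Γ (x : Fin p → R) (S : Set R) : Set (Fin p → ℝ) :=
  convexHull ℝ (toR '' ⋃ f ∈ S, supp x f)

/-- The Newton polyhedron `Γ_x(I)` of an ideal. -/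
def ΓI (x : Fin p → R) (I : Ideal R) : Set (Fin p → ℝ) := Γ x (I : Set R)

/-- The Newton polyhedron `Γ_x(f)` of an element: that of the principal ideal `(f)`. -/
def ΓE (x : Fin p → R) (f : R) : Set (Fin p → ℝ) := ΓI x (Ideal.span {f})

/-- The integral closure of an ideal `I`: elements satisfying an equation of integral
dependence `f^n + a_1 f^{n-1} + ⋯ + a_n = 0` with `a_i ∈ I^i`. -/
def intClosure (I : Ideal R) : Set R :=
  {f | ∃ n : ℕ, 0 < n ∧ ∃ a : ℕ → R, (∀ i ∈ Finset.Icc 1 n, a i ∈ I ^ i) ∧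
    f ^ n + ∑ i ∈ Finset.Icc 1 n, a i * f ^ (n - i) = 0}

/-- The monomial ideal `I_0` spanned by the lattice points of `Γ_x(I)`. -/
def idealZero (x : Fin p → R) (I : Ideal R) : Ideal R :=
  Ideal.span (mono x '' {a | toR a ∈ ΓI x I})

/-- The ideal `K_I` generated by the monomials lying in the integral closure of `I`. -/
def KIdeal (x : Fin p → R) (I : Ideal R) : Ideal R :=
  Ideal.span {m | (∃ a : Fin p → ℕ, m = mono x a) ∧ m ∈ intClosure I}

/-!
Since `x` is regular in every order, multiplication by monomials interacts with the irreducible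
monomial ideals `(x_i ^ (c_i + 1) : i)` as in a polynomial ring. The exponents `c` for which an
element `f` avoids such an ideal locally at the prime `(x)` form an upper set, and by Krull's
intersection theorem `f` lies, locally at `(x)`, in the ideal generated by the monomials with these
exponents; the minimal ones are the support of `f`.

If the monomial `x^a` is integral over `I` but `a ∉ Γ_x(I)`, then every lower term of an equation
of degree `n` lies, locally, in the irreducible ideal avoided by `x^(na)`: the exponents of `I ^ i`
belong to `i Γ_x(I)`. Conversely, the rational exponents that are integral over `I` (in the sense of
the Rees algebra) form a convex set, and a rational point in a real convex hull of rational points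
is in their rational convex hull. So when the integral closure of `I` is monomial, it is generated
by the `x^a` with `a ∈ Γ_x(I)`, and `Γ_x(I)` is in turn the convex hull of the exponents of the
monomials it contains.
-/

section PermutablyRegular

variable {ι : Type*} {x : ι → R}

lemma mem_sup_span_of_mul_mem {K : Ideal R} {y b r : R} (hy : IsSMulRegular (R ⧸ K) y)
    (h : y * r ∈ K ⊔ Ideal.span {y * b}) : r ∈ K ⊔ Ideal.span {b} := by
  obtain ⟨k, hk, _, hz, hr⟩ := Submodule.mem_sup.1 h
  obtain ⟨t, rfl⟩ := Ideal.mem_span_singleton'.1 hz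
  have hrt : r - t * b ∈ K := by
    refine mem_of_isSMulRegular_quotient_of_smul_mem hy ?_
    rwa [smul_eq_mul, show y * (r - t * b) = k by linear_combination -hr]
  exact Submodule.mem_sup.2
    ⟨_, hrt, t * b, Ideal.mem_span_singleton'.2 ⟨t, rfl⟩, sub_add_cancel _ _⟩

lemma isSMulRegular_quotient_sup_span_pow {K : Ideal R} {y z : R} (hy : IsSMulRegular (R ⧸ K) y)
    (hz : IsSMulRegular (R ⧸ K ⊔ Ideal.span {y}) z) (n : ℕ) :
    IsSMulRegular (R ⧸ K ⊔ Ideal.span {y ^ n}) z := by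
  simp only [isSMulRegular_quotient_iff_mem_of_smul_mem, smul_eq_mul] at hz ⊢
  induction n with
  | zero => simp [Ideal.span_singleton_one]
  | succ n ih =>
    intro r hr
    have hle : K ⊔ Ideal.span {y ^ (n + 1)} ≤ K ⊔ Ideal.span {y} :=
      sup_le_sup_left (Ideal.span_singleton_le_span_singleton.2 (dvd_pow_self y n.succ_ne_zero)) K
    obtain ⟨k, hk, _, hs, rfl⟩ := Submodule.mem_sup.1 (hz r (hle hr))
    obtain ⟨s, rfl⟩ := Ideal.mem_span_singleton'.1 hs
    have hzs : y * (z * s) ∈ K ⊔ Ideal.span {y * y ^ n} := by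
      rw [← pow_succ', show y * (z * s) = z * (k + s * y) - z * k by ring]
      exact sub_mem hr (Ideal.mul_mem_left _ _ (Ideal.mem_sup_left hk))
    obtain ⟨k', hk', _, ht, hs'⟩ := Submodule.mem_sup.1 (ih s (mem_sup_span_of_mul_mem hy hzs))
    obtain ⟨t, rfl⟩ := Ideal.mem_span_singleton'.1 ht
    refine Submodule.mem_sup.2 ⟨k + k' * y, add_mem hk (K.mul_mem_right y hk'), t * y ^ (n + 1),
      Ideal.mem_span_singleton'.2 ⟨t, rfl⟩, ?_⟩
    linear_combination y * hs'

/-- The family `x` is a (weakly) regular sequence in every order, phrased without choosing an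
order: every member is a nonzerodivisor modulo any set of other members. -/
def IsPermutablyRegular (x : ι → R) : Prop :=
  ∀ (S : Set ι) (i : ι), i ∉ S → IsSMulRegular (R ⧸ Ideal.span (x '' S)) (x i)

lemma isPermutablyRegular_of_isRegSeq {x : Fin p → R}
    (hx : ∀ σ : Equiv.Perm (Fin p), IsRegSeq (x ∘ σ)) : IsPermutablyRegular x := by
  classical
  intro S i hi
  -- Sorting by `rank` lists the members of `S` first and `i` right after them.
  let rank : Fin p → ℕ := fun j => if j ∈ S then 0 else if j = i then 1 else 2
  let σ := Tuple.sort rank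
  have hσ : Monotone (rank ∘ σ) := Tuple.monotone_sort rank
  have hi' : rank (σ (σ.symm i)) = 1 := by simp [rank, hi]
  have hS : (x ∘ σ) '' {j | j < σ.symm i} = x '' S := by
    rw [Set.image_comp]
    congr 1
    ext k
    rw [σ.image_eq_preimage_symm]
    constructor
    · intro (hk : σ.symm k < σ.symm i)
      have hle : rank (σ (σ.symm k)) ≤ 1 := hi' ▸ hσ hk.le
      have hne : k ≠ i := fun h => hk.ne (congrArg σ.symm h)
      by_contra hkS
      simp [rank, hkS, hne] at hle
    · intro hk
      exact hσ.reflect_lt (by simp [rank, hk, hi])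
  rw [isSMulRegular_quotient_iff_mem_of_smul_mem, ← hS]
  intro r hr
  exact (hx σ).2 (σ.symm i) r (by simpa [mul_comm] using hr)

namespace IsPermutablyRegular

lemma update_pow [DecidableEq ι] (hx : IsPermutablyRegular x) (j : ι) (n : ℕ) :
    IsPermutablyRegular (Function.update x j (x j ^ n)) := by
  intro S i hi
  have himage : ∀ T : Set ι, j ∉ T → Function.update x j (x j ^ n) '' T = x '' T := fun T hT =>
    Set.image_congr fun k hk => Function.update_of_ne (ne_of_mem_of_not_mem hk hT) _ _
  by_cases hjS : j ∈ S
  · have hij : i ≠ j := fun h => hi (h ▸ hjS)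
    have hjS' : j ∉ S \ {j} := by simp
    rw [← Set.insert_sdiff_self_of_mem hjS, Set.image_insert_eq, himage _ hjS',
      Function.update_self, Function.update_of_ne hij, Ideal.span_insert, sup_comm]
    refine isSMulRegular_quotient_sup_span_pow (hx _ j hjS') ?_ n
    rw [sup_comm, ← Ideal.span_insert, ← Set.image_insert_eq, Set.insert_sdiff_self_of_mem hjS]
    exact hx S i hi
  · rw [himage S hjS]
    rcases eq_or_ne i j with rfl | hij
    · rw [Function.update_self]
      exact (hx S i hi).pow n
    · rw [Function.update_of_ne hij]
      exact hx S i hi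

lemma pow [Finite ι] (hx : IsPermutablyRegular x) (n : ι → ℕ) :
    IsPermutablyRegular fun i => x i ^ n i := by
  classical
  cases nonempty_fintype ι
  suffices h : ∀ T : Finset ι, IsPermutablyRegular (T.piecewise (fun i => x i ^ n i) x) by
    simpa using h Finset.univ
  intro T
  induction T using Finset.induction_on with
  | empty => simpa using hx
  | insert j T hj ih =>
    rw [Finset.piecewise_insert]
    simpa [Finset.piecewise_eq_of_notMem _ _ _ hj] using ih.update_pow j (n j)

end IsPermutablyRegular

/-- The ideal `(x_i ^ n_i : i)`. For `n = c + 1` these are the irreducible monomial ideals: the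
monomials `x^b` they contain are those with `¬ b ≤ c`. -/
def powIdeal (x : ι → R) (n : ι → ℕ) : Ideal R := Ideal.span (Set.range fun i => x i ^ n i)

lemma powIdeal_one (x : ι → R) : powIdeal x 1 = Ideal.span (Set.range x) := by simp [powIdeal]

lemma powIdeal_le_iff {x : ι → R} {n : ι → ℕ} {K : Ideal R} :
    powIdeal x n ≤ K ↔ ∀ i, x i ^ n i ∈ K :=
  Ideal.span_le.trans Set.range_subset_iff

lemma pow_mem_powIdeal (x : ι → R) (n : ι → ℕ) (i : ι) : x i ^ n i ∈ powIdeal x n :=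
  powIdeal_le_iff.1 le_rfl i

lemma powIdeal_antitone (x : ι → R) : Antitone (powIdeal x) := fun _ _ hmn =>
  powIdeal_le_iff.2 fun i => Ideal.mem_of_dvd _ (pow_dvd_pow _ (hmn i)) (pow_mem_powIdeal x _ i)

lemma powIdeal_eq_sup (x : ι → R) (n : ι → ℕ) (j : ι) :
    powIdeal x n = Ideal.span ((fun i => x i ^ n i) '' {j}ᶜ) ⊔ Ideal.span {x j ^ n j} := by
  rw [powIdeal, ← Set.image_univ, ← Set.union_compl_self {j}, ← Set.insert_eq, Set.image_insert_eq,
    Ideal.span_insert, sup_comm]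

lemma IsPermutablyRegular.mem_powIdeal_of_pow_mul_mem [Finite ι] [DecidableEq ι]
    (hx : IsPermutablyRegular x) {n : ι → ℕ} {j : ι} {k : ℕ} {r : R}
    (h : x j ^ k * r ∈ powIdeal x (n + Pi.single j k : ι → ℕ)) : r ∈ powIdeal x n := by
  have himage : (fun i => x i ^ (n + Pi.single j k : ι → ℕ) i) '' {j}ᶜ =
      (fun i => x i ^ n i) '' {j}ᶜ :=
    Set.image_congr fun i hi => by simp [Pi.single_eq_of_ne (M := fun _ => ℕ) hi]
  have hreg : IsSMulRegular (R ⧸ Ideal.span ((fun i => x i ^ n i) '' {j}ᶜ)) (x j) := by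
    have himage' : (fun i => x i ^ Function.update n j 1 i) '' {j}ᶜ =
        (fun i => x i ^ n i) '' {j}ᶜ :=
      Set.image_congr fun i hi => by rw [Function.update_of_ne hi]
    have hreg' := hx.pow (Function.update n j 1) {j}ᶜ j (by simp)
    rw [himage'] at hreg'
    simpa only [Function.update_self, pow_one] using hreg'
  rw [powIdeal_eq_sup x _ j, himage, Pi.add_apply, Pi.single_eq_same, add_comm, pow_add] at h
  rw [powIdeal_eq_sup x n j]
  exact mem_sup_span_of_mul_mem (hreg.pow k) h

end PermutablyRegular

section Monomials

lemma mono_add (x : Fin p → R) (a b : Fin p → ℕ) : mono x (a + b) = mono x a * mono x b := by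
  simp [mono, pow_add, Finset.prod_mul_distrib]

lemma mono_nsmul (x : Fin p → R) (n : ℕ) (a : Fin p → ℕ) : mono x (n • a) = mono x a ^ n := by
  simp [mono, ← Finset.prod_pow, ← pow_mul, mul_comm]

lemma mono_dvd_mono (x : Fin p → R) {a b : Fin p → ℕ} (h : a ≤ b) : mono x a ∣ mono x b :=
  Finset.prod_dvd_prod_of_dvd _ _ fun i _ => pow_dvd_pow (x i) (h i)

lemma span_range_pow_eq_span_mono (x : Fin p → R) (n : ℕ) :
    Ideal.span (Set.range x) ^ n = Ideal.span (mono x '' {a | ∑ i, a i = n}) := by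
  apply le_antisymm
  · intro y hy
    obtain ⟨f, hf, rfl⟩ := (Ideal.mem_span_pow_iff_exists_isHomogeneous x y).1 hy
    rw [MvPolynomial.eval_eq']
    refine Ideal.sum_mem _ fun d hd => Ideal.mul_mem_left _ _ (Ideal.subset_span ⟨d, ?_, rfl⟩)
    rw [Set.mem_ofPred_eq, ← Finsupp.degree_eq_sum, Finsupp.degree_eq_weight_one]
    exact hf (MvPolynomial.mem_support_iff.1 hd)
  · refine Ideal.span_le.2 ?_
    rintro _ ⟨a, rfl, rfl⟩
    rw [← Finset.prod_pow_eq_pow_sum]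
    exact Ideal.prod_mem_prod fun i _ =>
      Ideal.pow_mem_pow (Ideal.subset_span (Set.mem_range_self i)) _

lemma mem_span_mono_iff {x : Fin p → R} {B : Set (Fin p → ℕ)} {f : R} :
    f ∈ Ideal.span (mono x '' B) ↔ ∃ (A : Finset (Fin p → ℕ)) (r : (Fin p → ℕ) → R),
      ↑A ⊆ B ∧ f = ∑ a ∈ A, r a * mono x a := by
  constructor
  · intro hf
    obtain ⟨l, hl, rfl⟩ := (Finsupp.mem_span_image_iff_linearCombination R).1 hf
    exact ⟨l.support, l, hl, rfl⟩
  · rintro ⟨A, r, hA, rfl⟩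
    exact Ideal.sum_mem _ fun a ha => Ideal.mul_mem_left _ _ (Ideal.subset_span ⟨a, hA ha, rfl⟩)

lemma span_mono_minimal (x : Fin p → R) (B : Set (Fin p → ℕ)) :
    Ideal.span (mono x '' {a | Minimal (· ∈ B) a}) = Ideal.span (mono x '' B) := by
  refine le_antisymm (Ideal.span_mono (Set.image_mono fun a ha => ha.prop)) (Ideal.span_le.2 ?_)
  rintro _ ⟨b, hb, rfl⟩
  obtain ⟨a, hab, ha⟩ := exists_minimal_le_of_wellFoundedLT (· ∈ B) b hb
  exact Ideal.mem_of_dvd _ (mono_dvd_mono x hab) (Ideal.subset_span ⟨a, ha, rfl⟩)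

lemma mono_mem_powIdeal (x : Fin p → R) {b c : Fin p → ℕ} (h : ¬ b ≤ c) :
    mono x b ∈ powIdeal x (c + 1) := by
  obtain ⟨i, hi⟩ : ∃ i, c i < b i := by simpa [Pi.le_def] using h
  exact Ideal.mem_of_dvd _ ((pow_dvd_pow _ hi).trans (Finset.dvd_prod_of_mem _ (Finset.mem_univ i)))
    (pow_mem_powIdeal x (c + 1) i)

lemma span_mono_le_powIdeal (x : Fin p → R) {B : Set (Fin p → ℕ)} {c : Fin p → ℕ}
    (h : ∀ b ∈ B, ¬ b ≤ c) : Ideal.span (mono x '' B) ≤ powIdeal x (c + 1) := by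
  refine Ideal.span_le.2 ?_
  rintro _ ⟨b, hb, rfl⟩
  exact mono_mem_powIdeal x (h b hb)

variable {x : Fin p → R}

lemma mono_mul_mem_powIdeal_iff (hx : IsPermutablyRegular x) {n d : Fin p → ℕ} {r : R} :
    mono x d * r ∈ powIdeal x (n + d) ↔ r ∈ powIdeal x n := by
  constructor
  · suffices h : ∀ (T : Finset (Fin p)) (n : Fin p → ℕ),
        (∏ i ∈ T, x i ^ d i) * r ∈ powIdeal x (n + ∑ i ∈ T, Pi.single i (d i)) →
          r ∈ powIdeal x n by
      intro hr
      exact h Finset.univ n (by rwa [Finset.univ_sum_single])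
    intro T
    induction T using Finset.induction_on with
    | empty => simp
    | insert j T hj ih =>
      intro n hr
      rw [Finset.prod_insert hj, Finset.sum_insert hj, mul_assoc,
        add_comm (Pi.single j (d j) : Fin p → ℕ), ← add_assoc] at hr
      exact ih n (hx.mem_powIdeal_of_pow_mul_mem hr)
  · intro hr
    suffices h : powIdeal x n ≤ Submodule.comap (LinearMap.mulLeft R (mono x d))
        (powIdeal x (n + d)) from h hr
    refine powIdeal_le_iff.2 fun i => ?_
    rw [Submodule.mem_comap, LinearMap.mulLeft_apply]
    refine Ideal.mem_of_dvd _ ?_ (pow_mem_powIdeal x (n + d) i)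
    rw [Pi.add_apply, pow_add, mul_comm]
    exact mul_dvd_mul_right (Finset.dvd_prod_of_mem _ (Finset.mem_univ i)) _

lemma mul_mono_mem_powIdeal_iff (hx : IsPermutablyRegular x) {c : Fin p → ℕ} {s : R} :
    s * mono x c ∈ powIdeal x (c + 1) ↔ s ∈ Ideal.span (Set.range x) := by
  rw [mul_comm, add_comm, mono_mul_mem_powIdeal_iff hx, powIdeal_one]

lemma mono_dvd_mono_iff (hx : IsPermutablyRegular x) (hne : Ideal.span (Set.range x) ≠ ⊤)
    {a b : Fin p → ℕ} : mono x a ∣ mono x b ↔ a ≤ b := by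
  refine ⟨fun h => ?_, mono_dvd_mono x⟩
  by_contra hab
  have hmem := Ideal.mem_of_dvd _ h (mono_mem_powIdeal x hab)
  rw [← one_mul (mono x b), mul_mono_mem_powIdeal_iff hx] at hmem
  exact hne ((Ideal.eq_top_iff_one _).2 hmem)

lemma sum_mul_mono_mem_powIdeal_iff (hx : IsPermutablyRegular x) {A : Finset (Fin p → ℕ)}
    {r : (Fin p → ℕ) → R} {c : Fin p → ℕ} (hc : c ∈ A) (hA : ∀ a ∈ A, a ≤ c → a = c) :
    ∑ a ∈ A, r a * mono x a ∈ powIdeal x (c + 1) ↔ r c ∈ Ideal.span (Set.range x) := by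
  classical
  rw [← Finset.add_sum_erase _ _ hc, Ideal.add_mem_iff_left, mul_mono_mem_powIdeal_iff hx]
  refine Ideal.sum_mem _ fun a ha => Ideal.mul_mem_left _ _ (mono_mem_powIdeal x fun hac => ?_)
  exact Finset.ne_of_mem_erase ha (hA a (Finset.mem_of_mem_erase ha) hac)

end Monomials

section Saturation

lemma mem_of_forall_mem_sup_maximalIdeal_pow {S : Type*} [CommRing S] [IsNoetherianRing S]
    [IsLocalRing S] {K : Ideal S} {f : S} (h : ∀ n, f ∈ K ⊔ IsLocalRing.maximalIdeal S ^ n) :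
    f ∈ K := by
  have hausdorff : IsHausdorff (IsLocalRing.maximalIdeal S) (S ⧸ K) := inferInstance
  rw [← Ideal.Quotient.eq_zero_iff_mem]
  refine hausdorff.haus _ fun n => ?_
  obtain ⟨k, hk, g, hg, rfl⟩ := Submodule.mem_sup.1 (h n)
  have hg1 : g • (1 : S ⧸ K) ∈ IsLocalRing.maximalIdeal S ^ n • (⊤ : Submodule S (S ⧸ K)) :=
    Submodule.smul_mem_smul hg Submodule.mem_top
  rw [Algebra.smul_def, mul_one] at hg1
  rwa [SModEq.zero, map_add, Ideal.Quotient.eq_zero_iff_mem.2 hk, zero_add]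

variable (P : Ideal R) [P.IsPrime]

/-- The saturation of `K` at the prime `P`: the contraction to `R` of the extension of `K` to the
local ring `R_P`. -/
def saturationAt (K : Ideal R) : Ideal R :=
  (K.map (algebraMap R (Localization.AtPrime P))).comap (algebraMap R (Localization.AtPrime P))

variable {P} {K L : Ideal R} {f : R}

lemma mem_saturationAt : f ∈ saturationAt P K ↔ ∃ h ∉ P, h * f ∈ K :=
  IsLocalization.algebraMap_mem_map_algebraMap_iff P.primeCompl _ _ _

lemma le_saturationAt : K ≤ saturationAt P K := Ideal.le_comap_map

lemma saturationAt_mono (h : K ≤ L) : saturationAt P K ≤ saturationAt P L :=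
  Ideal.comap_mono (Ideal.map_mono h)

lemma pow_le_saturationAt (h : L ≤ saturationAt P K) (n : ℕ) : L ^ n ≤ saturationAt P (K ^ n) := by
  rw [saturationAt, ← Ideal.map_le_iff_le_comap] at h ⊢
  rw [Ideal.map_pow, Ideal.map_pow]
  exact Ideal.pow_right_mono h n

lemma mem_saturationAt_of_forall_mem_sup_pow [IsNoetherianRing (Localization.AtPrime P)]
    (h : ∀ n, f ∈ K ⊔ P ^ n) : f ∈ saturationAt P K := by
  refine Ideal.mem_comap.2 (mem_of_forall_mem_sup_maximalIdeal_pow fun n => ?_)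
  have hn := Ideal.mem_map_of_mem (algebraMap R (Localization.AtPrime P)) (h n)
  rwa [Ideal.map_sup, Ideal.map_pow, Localization.AtPrime.map_eq_maximalIdeal] at hn

end Saturation

section LocalSupport

variable {x : Fin p → R} [(Ideal.span (Set.range x)).IsPrime] {f : R}

/-- The exponents `c` such that `f` lies outside `(x_i ^ (c_i + 1) : i)` locally at `(x)`. It is the
upward closure of the support of `f`, but needs no monomial representation to be defined. -/
def localSupp (x : Fin p → R) [(Ideal.span (Set.range x)).IsPrime] (f : R) : Set (Fin p → ℕ) :=
  {c | f ∉ saturationAt (Ideal.span (Set.range x)) (powIdeal x (c + 1))}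

lemma isUpperSet_localSupp : IsUpperSet (localSupp x f) := fun _ _ hbc hb hc =>
  hb (saturationAt_mono (powIdeal_antitone x (add_le_add_left hbc 1)) hc)

lemma exists_le_of_mem_localSupp {B : Set (Fin p → ℕ)} {c : Fin p → ℕ}
    (hf : f ∈ saturationAt (Ideal.span (Set.range x)) (Ideal.span (mono x '' B)))
    (hc : c ∈ localSupp x f) : ∃ b ∈ B, b ≤ c := by
  by_contra! hB
  exact hc (saturationAt_mono (span_mono_le_powIdeal x hB) hf)

lemma mem_localSupp_iff_of_mul_eq_sum (hx : IsPermutablyRegular x) {A : Finset (Fin p → ℕ)}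
    {h : R} {r : (Fin p → ℕ) → R} {c : Fin p → ℕ} (hh : h ∉ Ideal.span (Set.range x))
    (hf : h * f = ∑ a ∈ A, r a * mono x a) (hc : c ∈ A) (hA : ∀ a ∈ A, a ≤ c → a = c) :
    c ∈ localSupp x f ↔ r c ∉ Ideal.span (Set.range x) := by
  rw [localSupp, Set.mem_ofPred_eq, not_iff_not, mem_saturationAt]
  constructor
  · rintro ⟨g, hg, hgf⟩
    have hsum : h * (g * f) = ∑ a ∈ A, g * r a * mono x a := by
      simp only [mul_left_comm h, hf, Finset.mul_sum, mul_assoc]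
    have hgr : g * r c ∈ Ideal.span (Set.range x) := by
      rw [← sum_mul_mono_mem_powIdeal_iff hx hc hA (r := fun a => g * r a), ← hsum]
      exact Ideal.mul_mem_left _ h hgf
    exact (Ideal.IsPrime.mem_or_mem ‹_› hgr).resolve_left hg
  · intro hr
    exact ⟨h, hh, hf ▸ (sum_mul_mono_mem_powIdeal_iff hx hc hA).2 hr⟩

lemma mem_span_mono_localSupp_sup_pow (hx : IsPermutablyRegular x) (f : R) (n : ℕ) :
    f ∈ Ideal.span (mono x '' localSupp x f) ⊔ Ideal.span (Set.range x) ^ n := by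
  have hm : (1 : R) ∉ Ideal.span (Set.range x) := Ideal.IsPrime.one_notMem ‹_›
  induction n with
  | zero => simp
  | succ n ih =>
    obtain ⟨k, hk, g, hg, hkg⟩ := Submodule.mem_sup.1 ih
    rw [span_range_pow_eq_span_mono] at hg
    obtain ⟨A, s, hA, hs⟩ := mem_span_mono_iff.1 hg
    suffices h : k + ∑ a ∈ A, s a * mono x a ∈
        Ideal.span (mono x '' localSupp x f) ⊔ Ideal.span (Set.range x) ^ (n + 1) by
      rwa [← hs, hkg] at h
    refine Ideal.add_mem _ (Ideal.mem_sup_left hk) (Ideal.sum_mem _ fun c hc => ?_)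
    by_cases hsc : s c ∈ Ideal.span (Set.range x)
    · have hmono : mono x c ∈ Ideal.span (Set.range x) ^ n := by
        rw [span_range_pow_eq_span_mono]
        exact Ideal.subset_span ⟨c, hA hc, rfl⟩
      rw [pow_succ']
      exact Ideal.mem_sup_right (Ideal.mul_mem_mul hsc hmono)
    · have hmin : ∀ a ∈ A, a ≤ c → a = c := fun a ha hac => funext fun i =>
        (Finset.sum_eq_sum_iff_of_le fun i _ => hac i).1 ((hA ha).trans (hA hc).symm) i
          (Finset.mem_univ i)
      have hcg : c ∈ localSupp x g :=
        (mem_localSupp_iff_of_mul_eq_sum hx hm ((one_mul g).trans hs) hc hmin).2 hsc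
      have hcf : c ∈ localSupp x f := by
        by_contra hcf
        have hkc : k ∈ powIdeal x (c + 1) :=
          span_mono_le_powIdeal x (fun b hb hbc => hcf (isUpperSet_localSupp hbc hb)) hk
        refine hcg ((Ideal.add_mem_iff_right _ (le_saturationAt hkc)).1 ?_)
        rw [hkg]
        exact not_not.1 hcf
      exact Ideal.mem_sup_left (Ideal.mul_mem_left _ _ (Ideal.subset_span ⟨c, hcf, rfl⟩))

lemma localSupp_eq_upperClosure (hx : IsPermutablyRegular x) {A : Finset (Fin p → ℕ)}
    (hA : IsMinMonRep x f A) : localSupp x f = upperClosure (A : Set (Fin p → ℕ)) := by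
  obtain ⟨⟨h, r, hh, hr, hf⟩, hdvd⟩ := hA
  have hanti : ∀ c ∈ A, ∀ a ∈ A, a ≤ c → a = c := fun c hc a ha hac =>
    by_contra fun hne => hdvd a ha c hc hne (mono_dvd_mono x hac)
  ext c
  constructor
  · exact exists_le_of_mem_localSupp
      (mem_saturationAt.2 ⟨h, hh, mem_span_mono_iff.2 ⟨A, r, subset_rfl, hf⟩⟩)
  · rintro ⟨a, ha, hac⟩
    exact isUpperSet_localSupp hac
      ((mem_localSupp_iff_of_mul_eq_sum hx hh hf ha (hanti a ha)).2 (hr a ha))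

lemma add_mem_localSupp_mono_mul_iff (hx : IsPermutablyRegular x) {c d : Fin p → ℕ} :
    c + d ∈ localSupp x (mono x d * f) ↔ c ∈ localSupp x f := by
  simp only [localSupp, Set.mem_ofPred_eq, mem_saturationAt, mul_left_comm _ (mono x d),
    add_right_comm c d, mono_mul_mem_powIdeal_iff hx]

variable [IsNoetherianRing (Localization.AtPrime (Ideal.span (Set.range x)))]

lemma exists_isMinMonRep (hx : IsPermutablyRegular x) (f : R) : ∃ A, IsMinMonRep x f A := by
  have hf := mem_saturationAt_of_forall_mem_sup_pow (mem_span_mono_localSupp_sup_pow hx f)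
  rw [← span_mono_minimal, mem_saturationAt] at hf
  obtain ⟨h, hh, hhf⟩ := hf
  obtain ⟨A, r, hA, hsum⟩ := mem_span_mono_iff.1 hhf
  have hanti : ∀ c ∈ A, ∀ a ∈ A, a ≤ c → a = c := fun c hc a ha hac =>
    (setOfPred_minimal_antichain _).eq (hA ha) (hA hc) hac
  refine ⟨A, ⟨h, r, hh, fun a ha => ?_, hsum⟩, fun a ha b hb hab hdvd => ?_⟩
  · exact (mem_localSupp_iff_of_mul_eq_sum hx hh hsum ha (hanti a ha)).1 (hA ha).prop
  · rw [mono_dvd_mono_iff hx (Ideal.IsPrime.ne_top ‹_›)] at hdvd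
    exact hab (hanti b hb a ha hdvd)

lemma supp_eq_setOf_minimal (hx : IsPermutablyRegular x) (f : R) :
    supp x f = {c | Minimal (· ∈ localSupp x f) c} := by
  have hex := exists_isMinMonRep hx f
  have hanti : IsAntichain (· ≤ ·) (hex.choose : Set (Fin p → ℕ)) := fun a ha b hb hab hle =>
    hex.choose_spec.2 a ha b hb hab (mono_dvd_mono x hle)
  rw [supp, dif_pos hex, localSupp_eq_upperClosure hx hex.choose_spec]
  ext c
  exact hanti.minimal_mem_upperClosure_iff_mem.symm

lemma mem_saturationAt_span_supp (hx : IsPermutablyRegular x) (f : R) :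
    f ∈ saturationAt (Ideal.span (Set.range x)) (Ideal.span (mono x '' supp x f)) := by
  rw [supp_eq_setOf_minimal hx, span_mono_minimal]
  exact mem_saturationAt_of_forall_mem_sup_pow (mem_span_mono_localSupp_sup_pow hx f)

lemma exists_le_of_mem_supp (hx : IsPermutablyRegular x) {B : Set (Fin p → ℕ)} {a : Fin p → ℕ}
    (hf : f ∈ Ideal.span (mono x '' B)) (ha : a ∈ supp x f) : ∃ b ∈ B, b ≤ a := by
  rw [supp_eq_setOf_minimal hx] at ha
  exact exists_le_of_mem_localSupp (le_saturationAt hf) ha.prop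

lemma add_mem_supp_mono_mul (hx : IsPermutablyRegular x) {a : Fin p → ℕ} (ha : a ∈ supp x f)
    (d : Fin p → ℕ) : a + d ∈ supp x (mono x d * f) := by
  rw [supp_eq_setOf_minimal hx] at ha ⊢
  refine ⟨(add_mem_localSupp_mono_mul_iff hx).2 ha.prop, fun c hc hca => ?_⟩
  have hmem : mono x d * f ∈ Ideal.span (mono x '' {d}) := by
    rw [Set.image_singleton]
    exact Ideal.mul_mem_right _ _ (Ideal.mem_span_singleton_self _)
  obtain ⟨_, rfl, hdc⟩ := exists_le_of_mem_localSupp (le_saturationAt hmem) hc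
  obtain ⟨e, rfl⟩ := exists_add_of_le hdc
  rw [add_comm, add_mem_localSupp_mono_mul_iff hx] at hc
  rw [add_comm _ e] at hca ⊢
  exact add_le_add_left (ha.le_of_le hc (le_of_add_le_add_right hca)) _

end LocalSupport

section IntegralClosure

open Polynomial

variable {I : Ideal R} {f : R}

lemma mem_intClosure_of_mem (hf : f ∈ I) : f ∈ intClosure I :=
  ⟨1, one_pos, fun _ => -f, by simpa using hf, by simp⟩

lemma isIntegral_monomial_of_mem_intClosure (hf : f ∈ intClosure I) :
    IsIntegral (reesAlgebra I) (monomial 1 f : R[X]) := by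
  nontriviality R
  obtain ⟨n, hn, a, ha, hroot⟩ := hf
  have hlift : ∀ i ∈ Finset.Icc 1 n, ∃ c : reesAlgebra I, (c : R[X]) = monomial i (a i) :=
    fun i hi => ⟨⟨_, reesAlgebra.monomial_mem.2 (ha i hi)⟩, rfl⟩
  choose! c hc using hlift
  refine ⟨X ^ n + ∑ i ∈ Finset.Icc 1 n, C (c i) * X ^ (n - i), monic_X_pow_add ?_, ?_⟩
  · refine (degree_sum_le _ _).trans_lt ?_
    refine (Finset.sup_lt_iff (WithBot.bot_lt_coe n)).2 fun i hi => ?_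
    have hlt : n - i < n := Nat.sub_lt hn (Finset.mem_Icc.1 hi).1
    exact (degree_C_mul_X_pow_le _ _).trans_lt (WithBot.coe_lt_coe.2 hlt)
  · have hterm : ∀ i ∈ Finset.Icc 1 n,
        eval₂ (algebraMap (reesAlgebra I) R[X]) (monomial 1 f) (C (c i) * X ^ (n - i)) =
          monomial n (a i * f ^ (n - i)) := by
      intro i hi
      have hci : algebraMap (reesAlgebra I) R[X] (c i) = monomial i (a i) := hc i hi
      rw [eval₂_mul, eval₂_C, eval₂_X_pow, hci, monomial_pow, one_mul, monomial_mul_monomial,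
        Nat.add_sub_cancel' (Finset.mem_Icc.1 hi).2]
    rw [eval₂_add, eval₂_finsetSum, Finset.sum_congr rfl hterm, eval₂_X_pow, monomial_pow, one_mul,
      ← map_sum, ← map_add, hroot, map_zero]

-- Read off the coefficient of degree `P.natDegree` in `P(f T) = 0`.
lemma mem_intClosure_of_isIntegral_monomial
    (hf : IsIntegral (reesAlgebra I) (monomial 1 f : R[X])) : f ∈ intClosure I := by
  rcases subsingleton_or_nontrivial R with _ | _
  · rw [Subsingleton.elim f 0]
    exact mem_intClosure_of_mem I.zero_mem
  obtain ⟨P, hP, hroot⟩ := hf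
  set n := P.natDegree with hn
  have hpos : 0 < n := by
    refine Nat.pos_of_ne_zero fun hzero => ?_
    rw [hP.natDegree_eq_zero.1 hzero, eval₂_one] at hroot
    exact one_ne_zero hroot
  refine ⟨n, hpos, fun i => (P.coeff (n - i) : R[X]).coeff i,
    fun i _ => (mem_reesAlgebra_iff I _).1 (P.coeff (n - i)).2 i, ?_⟩
  have hterm : ∀ i ∈ Finset.range (n + 1),
      (algebraMap (reesAlgebra I) R[X] (P.coeff (n - i)) * monomial 1 f ^ (n - i)).coeff n =
        (P.coeff (n - i) : R[X]).coeff i * f ^ (n - i) := by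
    intro i hi
    obtain ⟨j, hj⟩ := Nat.exists_eq_add_of_le (Nat.lt_succ_iff.1 (Finset.mem_range.1 hi))
    rw [monomial_pow, one_mul, hj, Nat.add_sub_cancel_left]
    exact coeff_mul_monomial _ _ _ _
  have hcoeff := congrArg (fun q : R[X] => q.coeff n) hroot
  simp only [eval₂_eq_sum_range, ← hn] at hcoeff
  rw [← Finset.sum_flip, finsetSum_coeff, Finset.sum_congr rfl hterm, coeff_zero,
    Finset.sum_range_eq_add_Ico _ (Nat.add_one_pos n), Finset.Ico_add_one_right_eq_Icc,
    Nat.sub_zero, hn, hP.coeff_natDegree, ← hn] at hcoeff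
  simpa using hcoeff

end IntegralClosure

section ConvexHull

lemma mem_convexHull_of_algebraMap_comp_mem {ι K L : Type*} [Field K] [LinearOrder K]
    [IsStrictOrderedRing K] [Field L] [LinearOrder L] [IsStrictOrderedRing L] [Algebra K L]
    [IsOrderedModule K L] {s : Set (ι → K)} {q : ι → K}
    (hq : algebraMap K L ∘ q ∈ convexHull L ((algebraMap K L ∘ ·) '' s)) : q ∈ convexHull K s := by
  obtain ⟨κ, _, z, w, hzs, hind, hw0, hw1, hwz⟩ := eq_pos_convex_span_of_mem_convexHull hq
  choose u hus huz using fun k => hzs ⟨k, rfl⟩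
  obtain ⟨φ, hφ⟩ := (Algebra.linearMap K L).exists_leftInverse_of_injective
    (LinearMap.ker_eq_bot.2 (algebraMap K L).injective)
  have hφ_algebraMap : ∀ c : K, φ (algebraMap K L c) = c := LinearMap.congr_fun hφ
  have hφw1 : ∑ k, φ (w k) = 1 := by
    rw [← map_sum, hw1, ← map_one (algebraMap K L), hφ_algebraMap]
  have hφwu : ∑ k, φ (w k) • u k = q := by
    funext i
    have hi : ∑ k, u k i • w k = algebraMap K L (q i) := by
      simpa [← huz, Algebra.smul_def, mul_comm] using congrFun hwz i
    simpa [hφ_algebraMap, mul_comm] using congrArg φ hi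
  -- Both `w` and `algebraMap ∘ φ ∘ w` are barycentric coordinates of the same point.
  have hw : algebraMap K L ∘ φ ∘ w = w := by
    have h1 : ∑ k, (algebraMap K L ∘ φ ∘ w) k = 1 := by
      simp only [Function.comp_apply, ← map_sum (algebraMap K L), hφw1, map_one]
    refine (affineIndependent_iff_eq_of_fintype_affineCombination_eq L z).1 hind _ _ h1 hw1 ?_
    rw [Finset.affineCombination_eq_linear_combination _ _ _ h1,
      Finset.affineCombination_eq_linear_combination _ _ _ hw1, hwz, ← hφwu]
    funext i
    simp [← huz, Algebra.smul_def]
  refine hφwu ▸ (convex_convexHull K s).sum_mem (fun k _ => ?_) hφw1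
    fun k _ => subset_convexHull K s (hus k)
  have hk : 0 < algebraMap K L (φ (w k)) := (hw0 k).trans_eq (congrFun hw k).symm
  by_contra! hneg
  exact hk.not_ge ((algebraMap_mono L hneg.le).trans_eq (map_zero _))

lemma toR_add (a b : Fin p → ℕ) : toR (a + b) = toR a + toR b := by
  funext i; simp [toR]

lemma toR_nsmul (n : ℕ) (a : Fin p → ℕ) : toR (n • a) = (n : ℝ) • toR a := by
  funext i; simp [toR]

lemma toR_le_toR {a b : Fin p → ℕ} : toR a ≤ toR b ↔ a ≤ b := by simp [toR, Pi.le_def]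

lemma mem_convexHull_range_toR {v : Fin p → ℝ} (hv : 0 ≤ v) :
    v ∈ convexHull ℝ (Set.range (toR (p := p))) := by
  have hrange : Set.range (toR (p := p)) = Set.univ.pi fun _ => Set.range (Nat.cast : ℕ → ℝ) :=
    Set.range_piMap fun _ => Nat.cast
  rw [hrange, convexHull_pi]
  intro i _
  obtain ⟨n, hn⟩ := exists_nat_ge (v i)
  refine segment_subset_convexHull (Set.mem_range_self 0) (Set.mem_range_self n) ?_
  rw [Nat.cast_zero, segment_eq_Icc n.cast_nonneg]
  exact ⟨hv i, hn⟩

lemma isUpperSet_convexHull_image_toR {S : Set (Fin p → ℕ)} (hS : IsUpperSet S) :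
    IsUpperSet (convexHull ℝ (toR '' S)) := by
  intro u v huv hu
  have hadd : toR '' S + Set.range toR ⊆ toR '' S := by
    rintro _ ⟨_, ⟨a, ha, rfl⟩, _, ⟨d, rfl⟩, rfl⟩
    exact ⟨a + d, hS le_self_add ha, toR_add a d⟩
  refine convexHull_mono hadd ?_
  rw [convexHull_add, ← add_sub_cancel u v]
  exact Set.add_mem_add hu (mem_convexHull_range_toR (sub_nonneg.2 huv))

end ConvexHull

section RationalExponents

open Polynomial

variable {x : Fin p → R} {I : Ideal R}

lemma exists_nat_eq_div_add {s t : ℚ} (hs : 0 ≤ s) (ht : 0 ≤ t) (hst : s + t = 1) :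
    ∃ m n : ℕ, 0 < m + n ∧ ((m + n : ℕ) : ℚ) * s = m ∧ ((m + n : ℕ) : ℚ) * t = n := by
  obtain ⟨m, hm⟩ : ∃ m : ℕ, (m : ℚ) = s.den * s := by
    refine ⟨s.num.toNat, ?_⟩
    rw [Rat.den_mul_eq_num, ← Int.cast_natCast, Int.toNat_of_nonneg (Rat.num_nonneg.2 hs)]
  have hle : m ≤ s.den := by
    rw [← Nat.cast_le (α := ℚ), hm]
    exact mul_le_of_le_one_right s.den.cast_nonneg (by linarith)
  refine ⟨m, s.den - m, ?_, ?_, ?_⟩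
  · rw [Nat.add_sub_cancel' hle]
    exact s.den_pos
  · rw [Nat.add_sub_cancel' hle, hm]
  · rw [Nat.add_sub_cancel' hle, Nat.cast_sub hle, hm]
    linear_combination (s.den : ℚ) * hst

/-- The rational vectors `q` for which the (possibly fractional) monomial `x^q` is integral over
`I`: some honest monomial `x^b` with `b = N q`, `N > 0`, is integral over `I ^ N`, which is
expressed in the Rees algebra. -/
def integralExponents (x : Fin p → R) (I : Ideal R) : Set (Fin p → ℚ) :=
  {q | ∃ N : ℕ, 0 < N ∧ ∃ b : Fin p → ℕ, (∀ i, (b i : ℚ) = N * q i) ∧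
    IsIntegral (reesAlgebra I) (monomial N (mono x b) : R[X])}

lemma natCast_mem_integralExponents_iff {a : Fin p → ℕ} :
    (fun i => (a i : ℚ)) ∈ integralExponents x I ↔ mono x a ∈ intClosure I := by
  constructor
  · rintro ⟨N, hN, b, hb, hq⟩
    have hba : b = N • a := funext fun i => Nat.cast_injective (R := ℚ) (by simp [hb i])
    refine mem_intClosure_of_isIntegral_monomial (IsIntegral.of_pow hN ?_)
    rwa [monomial_pow, one_mul, ← mono_nsmul, ← hba]
  · intro ha
    exact ⟨1, one_pos, a, fun i => by simp, isIntegral_monomial_of_mem_intClosure ha⟩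

lemma convex_integralExponents (x : Fin p → R) (I : Ideal R) :
    Convex ℚ (integralExponents x I) := by
  rintro q ⟨N, hN, b, hb, hq⟩ q' ⟨N', hN', b', hb', hq'⟩ s t hs ht hst
  obtain ⟨m, n, hmn, hm, hn⟩ := exists_nat_eq_div_add hs ht hst
  refine ⟨(m + n) * (N * N'), by positivity, (N' * m) • b + (N * n) • b', fun i => ?_, ?_⟩
  · simp only [Pi.add_apply, Pi.smul_apply, smul_eq_mul]
    push_cast at hm hn ⊢
    rw [hb, hb']
    linear_combination -(N * N' * q i) * hm - (N * N' * q' i) * hn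
  · have hmul := (hq.pow (N' * m)).mul (hq'.pow (N * n))
    rw [monomial_pow, monomial_pow, monomial_mul_monomial, ← mono_nsmul, ← mono_nsmul,
      ← mono_add] at hmul
    rwa [show (m + n) * (N * N') = N * (N' * m) + N' * (N * n) by ring]

lemma mono_mem_intClosure_of_mem_convexHull {S : Set (Fin p → ℕ)} {a : Fin p → ℕ}
    (hS : ∀ b ∈ S, mono x b ∈ intClosure I) (ha : toR a ∈ convexHull ℝ (toR '' S)) :
    mono x a ∈ intClosure I := by
  have htoR : ∀ b : Fin p → ℕ, toR b = algebraMap ℚ ℝ ∘ fun i => (b i : ℚ) := fun b => by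
    funext i; simp [toR]
  have himage : toR '' S = (algebraMap ℚ ℝ ∘ ·) '' ((fun b i => (b i : ℚ)) '' S) := by
    rw [Set.image_image]
    exact Set.image_congr fun b _ => htoR b
  rw [himage, htoR] at ha
  rw [← natCast_mem_integralExponents_iff]
  refine convexHull_min ?_ (convex_integralExponents x I) (mem_convexHull_of_algebraMap_comp_mem ha)
  rintro _ ⟨b, hb, rfl⟩
  exact natCast_mem_integralExponents_iff.2 (hS b hb)

end RationalExponents

section NewtonPolyhedron

variable {x : Fin p → R}

/-- The exponents occurring in the supports of the elements of `I`; their convex hull is the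
Newton polyhedron of `I`. -/
def exponents (x : Fin p → R) (I : Ideal R) : Set (Fin p → ℕ) := ⋃ f ∈ (I : Set R), supp x f

lemma span_mono_pow_le (x : Fin p → R) (S : Set (Fin p → ℕ)) {n : ℕ} (hn : n ≠ 0) :
    Ideal.span (mono x '' S) ^ n ≤
      Ideal.span (mono x '' {b | toR b ∈ (n : ℝ) • convexHull ℝ (toR '' S)}) := by
  induction n, Nat.one_le_iff_ne_zero.2 hn using Nat.le_induction with
  | base =>
    rw [pow_one, Nat.cast_one, one_smul]
    exact Ideal.span_mono (Set.image_mono fun a ha => subset_convexHull _ _ ⟨a, ha, rfl⟩)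
  | succ n hle ih =>
    rw [pow_succ]
    refine (Ideal.mul_mono_left (ih (Nat.one_le_iff_ne_zero.1 hle))).trans ?_
    rw [Ideal.span_mul_span', Ideal.span_le]
    rintro _ ⟨_, ⟨b, hb, rfl⟩, _, ⟨a, ha, rfl⟩, rfl⟩
    refine Ideal.subset_span ⟨b + a, ?_, mono_add x b a⟩
    rw [Set.mem_ofPred_eq, toR_add, Nat.cast_succ,
      (convex_convexHull ℝ _).add_smul n.cast_nonneg zero_le_one, one_smul]
    exact Set.add_mem_add hb (subset_convexHull _ _ ⟨a, ha, rfl⟩)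

variable [(Ideal.span (Set.range x)).IsPrime]
  [IsNoetherianRing (Localization.AtPrime (Ideal.span (Set.range x)))] {I : Ideal R}

lemma isUpperSet_exponents (hx : IsPermutablyRegular x) (I : Ideal R) :
    IsUpperSet (exponents x I) := by
  intro a b hab ha
  obtain ⟨f, hf, haf⟩ := Set.mem_iUnion₂.1 ha
  obtain ⟨d, rfl⟩ := exists_add_of_le hab
  exact Set.mem_biUnion (I.mul_mem_left (mono x d) hf) (add_mem_supp_mono_mul hx haf d)

lemma isUpperSet_ΓI (hx : IsPermutablyRegular x) (I : Ideal R) : IsUpperSet (ΓI x I) :=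
  isUpperSet_convexHull_image_toR (isUpperSet_exponents hx I)

lemma le_saturationAt_span_exponents (hx : IsPermutablyRegular x) (I : Ideal R) :
    I ≤ saturationAt (Ideal.span (Set.range x)) (Ideal.span (mono x '' exponents x I)) :=
  fun f hf => saturationAt_mono
    (Ideal.span_mono (Set.image_mono (Set.subset_biUnion_of_mem (u := supp x) hf)))
    (mem_saturationAt_span_supp hx f)

lemma mul_mono_mem_saturationAt (hx : IsPermutablyRegular x) {a : Fin p → ℕ}
    (ha : toR a ∉ ΓI x I) {n : ℕ} (hn : n ≠ 0) {c : R} (hc : c ∈ I ^ n) (d : Fin p → ℕ) :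
    c * mono x d ∈ saturationAt (Ideal.span (Set.range x)) (powIdeal x (n • a + d + 1)) := by
  obtain ⟨h, hh, hhc⟩ := mem_saturationAt.1 (saturationAt_mono (span_mono_pow_le x _ hn)
    (pow_le_saturationAt (le_saturationAt_span_exponents hx I) n hc))
  refine mem_saturationAt.2 ⟨h, hh, ?_⟩
  rw [add_right_comm, mul_comm c, mul_left_comm, mono_mul_mem_powIdeal_iff hx]
  refine span_mono_le_powIdeal x (fun b hb hba => ha ?_) hhc
  obtain ⟨u, hu, hub⟩ := hb
  have hn0 : (0 : ℝ) < n := by positivity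
  refine isUpperSet_ΓI hx I (le_of_smul_le_smul_left ?_ hn0) hu
  calc (n : ℝ) • u = toR b := hub
    _ ≤ toR (n • a) := toR_le_toR.2 hba
    _ = (n : ℝ) • toR a := toR_nsmul n a

lemma toR_mem_ΓI_of_mono_mem_intClosure (hx : IsPermutablyRegular x) {a : Fin p → ℕ}
    (ha : mono x a ∈ intClosure I) : toR a ∈ ΓI x I := by
  by_contra hna
  obtain ⟨n, -, c, hc, hroot⟩ := ha
  have hlower : ∑ i ∈ Finset.Icc 1 n, c i * mono x a ^ (n - i) ∈
      saturationAt (Ideal.span (Set.range x)) (powIdeal x (n • a + 1)) := by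
    refine Ideal.sum_mem _ fun i hi => ?_
    obtain ⟨h1i, hin⟩ := Finset.mem_Icc.1 hi
    have hmem := mul_mono_mem_saturationAt hx hna (Nat.one_le_iff_ne_zero.1 h1i) (hc i hi)
      ((n - i) • a)
    rwa [← add_nsmul, Nat.add_sub_cancel' hin, mono_nsmul] at hmem
  rw [← neg_mem_iff, ← eq_neg_of_add_eq_zero_left hroot, ← mono_nsmul, mem_saturationAt] at hlower
  obtain ⟨h, hh, hmem⟩ := hlower
  exact hh ((mul_mono_mem_powIdeal_iff hx).1 hmem)

section MonomialClosure

variable {B : Set (Fin p → ℕ)}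

lemma mono_mem_intClosure_of_mem_exponents (hx : IsPermutablyRegular x)
    (hI : intClosure I = ↑(Ideal.span (mono x '' B))) {a : Fin p → ℕ} (ha : a ∈ exponents x I) :
    mono x a ∈ intClosure I := by
  obtain ⟨f, hf, haf⟩ := Set.mem_iUnion₂.1 ha
  have hfB : f ∈ Ideal.span (mono x '' B) := SetLike.mem_coe.1 (hI ▸ mem_intClosure_of_mem hf)
  obtain ⟨b, hb, hba⟩ := exists_le_of_mem_supp hx hfB haf
  rw [hI]
  exact Ideal.mem_of_dvd _ (mono_dvd_mono x hba) (Ideal.subset_span ⟨b, hb, rfl⟩)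

lemma mono_mem_intClosure_iff (hx : IsPermutablyRegular x)
    (hI : intClosure I = ↑(Ideal.span (mono x '' B))) {a : Fin p → ℕ} :
    mono x a ∈ intClosure I ↔ toR a ∈ ΓI x I :=
  ⟨toR_mem_ΓI_of_mono_mem_intClosure hx, mono_mem_intClosure_of_mem_convexHull fun _ =>
    mono_mem_intClosure_of_mem_exponents hx hI⟩

lemma intClosure_eq_idealZero (hx : IsPermutablyRegular x)
    (hI : intClosure I = ↑(Ideal.span (mono x '' B))) : intClosure I = idealZero x I := by
  apply Set.Subset.antisymm
  · rw [hI]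
    refine Ideal.span_mono (Set.image_mono fun b hb => ?_)
    refine toR_mem_ΓI_of_mono_mem_intClosure hx ?_
    rw [hI]
    exact Ideal.subset_span ⟨b, hb, rfl⟩
  · rw [hI, SetLike.coe_subset_coe, idealZero, Ideal.span_le, ← hI]
    rintro _ ⟨a, ha, rfl⟩
    exact (mono_mem_intClosure_iff hx hI).2 ha

lemma ΓI_eq_convexHull_mono_mem_intClosure (hx : IsPermutablyRegular x)
    (hI : intClosure I = ↑(Ideal.span (mono x '' B))) :
    ΓI x I = convexHull ℝ (toR '' {a | mono x a ∈ intClosure I}) := by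
  apply Set.Subset.antisymm
  · exact convexHull_mono (Set.image_mono fun a => mono_mem_intClosure_of_mem_exponents hx hI)
  · refine convexHull_min ?_ (convex_convexHull ℝ _)
    rintro _ ⟨a, ha, rfl⟩
    exact toR_mem_ΓI_of_mono_mem_intClosure hx ha

end MonomialClosure

end NewtonPolyhedron

lemma IsGRSOP.isPermutablyRegular {x : Fin p → R} (hx : IsGRSOP x) : IsPermutablyRegular x :=
  isPermutablyRegular_of_isRegSeq hx.1

lemma IsGRSOP.isPrime_span_range {x : Fin p → R} (hx : IsGRSOP x) :
    (Ideal.span (Set.range x)).IsPrime := by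
  rw [← Set.image_univ, ← Ideal.Quotient.isDomain_iff_prime]
  exact (hx.2 Set.univ).1

theorem intClosure_eq_iff_newtonPolyhedron_eq_general (x : Fin p → R)
    (hx : IsPermutablyRegular x) [(Ideal.span (Set.range x)).IsPrime]
    [IsNoetherianRing (Localization.AtPrime (Ideal.span (Set.range x)))] (I J : Ideal R)
    (hI : ∃ A : Set (Fin p → ℕ), intClosure I = ↑(Ideal.span (mono x '' A)))
    (hJ : ∃ A : Set (Fin p → ℕ), intClosure J = ↑(Ideal.span (mono x '' A))) :
    intClosure I = intClosure J ↔ ΓI x I = ΓI x J := by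
  obtain ⟨A, hA⟩ := hI
  obtain ⟨B, hB⟩ := hJ
  constructor
  · intro h
    rw [ΓI_eq_convexHull_mono_mem_intClosure hx hA, h,
      ΓI_eq_convexHull_mono_mem_intClosure hx hB]
  · intro h
    rw [intClosure_eq_idealZero hx hA, intClosure_eq_idealZero hx hB, idealZero, idealZero, h]

/-- ideals with monomial integral closures have equal closures iff
equal Newton polyhedra. -/
theorem intClosure_eq_iff_newtonPolyhedron_eq {R : Type*} [CommRing R] {p : ℕ}
    (x : Fin p → R) (hR : IsRegularDomain R) (hx : IsGRSOP x) (I J : Ideal R)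
    (hI : ∃ A : Set (Fin p → ℕ), intClosure I = ↑(Ideal.span (mono x '' A)))
    (hJ : ∃ A : Set (Fin p → ℕ), intClosure J = ↑(Ideal.span (mono x '' A))) :
    intClosure I = intClosure J ↔ ΓI x I = ΓI x J := by
  have hprime := hx.isPrime_span_range
  have hnoeth : IsNoetherianRing (Localization.AtPrime (Ideal.span (Set.range x))) :=
    (hR.2 _ hprime).1
  exact intClosure_eq_iff_newtonPolyhedron_eq_general x hx.isPermutablyRegular I J hI hJ

end NND
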